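/- arXiv:2206.13879 — 7 statements merged into one kernel-verified Lean document; each statement's English description precedes it below -/
import Mathlib

section
/- For all real μ with 0 ≤ μ ≤ 1, all real λ ≥ 0 and all real t ≥ 0, one has (1 + λ)^(−μ) · (1 − exp(−t·λ)) ≤ t^μ. -/
theorem one_sub_exp_neg_le_rpow {x μ : ℝ} (hx : 0 ≤ x) (hμ0 : 0 ≤ μ) (hμ1 : μ ≤ 1) :
    1 - Real.exp (-x) ≤ x ^ μ := by
  have nonneg : 0 ≤ 1 - Real.exp (-x) :=
    sub_nonneg.mpr (Real.exp_le_one_iff.mpr (neg_nonpos.mpr hx))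
  have le_one : 1 - Real.exp (-x) ≤ 1 := sub_le_self 1 (Real.exp_pos (-x)).le
  have le_self : 1 - Real.exp (-x) ≤ x := sub_le_comm.mp (Real.one_sub_le_exp_neg x)
  calc
    1 - Real.exp (-x) ≤ (1 - Real.exp (-x)) ^ μ := Real.self_le_rpow_of_le_one nonneg le_one hμ1
    _ ≤ x ^ μ := Real.rpow_le_rpow nonneg le_self hμ0

theorem scalar_semigroup_holder_general {μ a lam t : ℝ} (hμ0 : 0 ≤ μ) (hμ1 : μ ≤ 1)
    (ha : 0 < a) (hlam : lam ≤ a) (ht : 0 ≤ t) :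
    a ^ (-μ) * (1 - Real.exp (-(t * lam))) ≤ t ^ μ := by
  rw [Real.rpow_neg ha.le, inv_mul_le_iff₀ (Real.rpow_pos_of_pos ha μ)]
  calc
    1 - Real.exp (-(t * lam)) ≤ 1 - Real.exp (-(t * a)) := by gcongr
    _ ≤ (t * a) ^ μ := one_sub_exp_neg_le_rpow (mul_nonneg ht ha.le) hμ0 hμ1
    _ = a ^ μ * t ^ μ := by rw [mul_comm t a, Real.mul_rpow ha.le ht]

/-- Scalar spectral content of the semigroup Hölder estimate
`‖(I+A)^{−μ}(I − E(t))v‖ ≲ t^μ‖v‖` (Lemma 3.4, estimate (3.21)). -/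
theorem scalar_semigroup_holder (μ : ℝ) (hμ0 : 0 ≤ μ) (hμ1 : μ ≤ 1)
    (lam t : ℝ) (hlam : 0 ≤ lam) (ht : 0 ≤ t) :
    (1 + lam) ^ (-μ) * (1 - Real.exp (-(t * lam))) ≤ t ^ μ :=
  scalar_semigroup_holder_general hμ0 hμ1 (by positivity) (by simp) ht
end

section
/- For every real ρ with 0 ≤ ρ ≤ 1 and every T > 0 there exists a constant C > 0, depending only on ρ and T, such that for all real λ ≥ 0 and all 0 ≤ t₁ ≤ t₂ ≤ T one has ∫_{t₁}^{t₂} (1 + λ)^ρ · exp(−2λ(t₂ − s)) ds ≤ C · (t₂ − t₁)^(1−ρ). -/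
/-!
Let `J` be the integral of `exp (-(2 * lam * (t₂ - s)))` over `[t₁, t₂]`. It is at most `t₂ - t₁`,
since the integrand is at most `1`, and `2 * lam * J ≤ 1`, by exact integration; together these give
`(1 + lam) * J ≤ t₂ - t₁ + 1 / 2`. Interpolating between the bounds on `(1 + lam) * J` and on `J`
with exponents `ρ` and `1 - ρ` bounds `(1 + lam) ^ ρ * J`.
-/

theorem rpow_mul_le_rpow_mul_rpow_one_sub {a x M N ρ : ℝ} (ha : 0 ≤ a) (hx : 0 ≤ x)
    (hρ0 : 0 ≤ ρ) (hρ1 : ρ ≤ 1) (hM : a * x ≤ M) (hN : x ≤ N) :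
    a ^ ρ * x ≤ M ^ ρ * N ^ (1 - ρ) := by
  have x_split : x ^ ρ * x ^ (1 - ρ) = x := by
    rw [← Real.rpow_add' hx (by simp), add_sub_cancel, Real.rpow_one]
  have : 0 ≤ 1 - ρ := sub_nonneg.mpr hρ1
  have : 0 ≤ M := (mul_nonneg ha hx).trans hM
  calc
    a ^ ρ * x = (a * x) ^ ρ * x ^ (1 - ρ) := by rw [Real.mul_rpow ha hx, mul_assoc, x_split]
    _ ≤ M ^ ρ * N ^ (1 - ρ) := by gcongr

theorem mul_integral_exp_neg_mul_sub (k a b : ℝ) :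
    k * ∫ s in a..b, Real.exp (-(k * (b - s))) = 1 - Real.exp (-(k * (b - a))) := by
  have exponent_eq (s : ℝ) : -(k * (b - s)) = k * s - k * b := by ring
  simp only [exponent_eq]
  rw [intervalIntegral.mul_integral_comp_mul_sub, integral_exp, sub_self, Real.exp_zero]

theorem integral_exp_neg_mul_sub_le_sub {k a b : ℝ} (hk : 0 ≤ k) (hab : a ≤ b) :
    ∫ s in a..b, Real.exp (-(k * (b - s))) ≤ b - a := by
  have integrand_le_one : ∀ s ∈ Set.Icc a b, Real.exp (-(k * (b - s))) ≤ 1 := fun s hs =>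
    Real.exp_le_one_iff.mpr (neg_nonpos.mpr (mul_nonneg hk (sub_nonneg.mpr hs.2)))
  calc
    ∫ s in a..b, Real.exp (-(k * (b - s))) ≤ ∫ _ in a..b, (1 : ℝ) :=
      intervalIntegral.integral_mono_on hab
        (Continuous.intervalIntegrable (by fun_prop) a b) intervalIntegrable_const integrand_le_one
    _ = b - a := integral_one

theorem one_add_mul_integral_exp_le {lam t₁ t₂ : ℝ} (hlam : 0 ≤ lam) (ht : t₁ ≤ t₂) :
    (1 + lam) * ∫ s in t₁..t₂, Real.exp (-(2 * lam * (t₂ - s))) ≤ t₂ - t₁ + 1 / 2 := by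
  have le_length := integral_exp_neg_mul_sub_le_sub (k := 2 * lam) (by positivity) ht
  have exact_value := mul_integral_exp_neg_mul_sub (2 * lam) t₁ t₂
  have exp_pos := Real.exp_pos (-(2 * lam * (t₂ - t₁)))
  linarith

theorem scalar_integrated_semigroup_smoothing_general {ρ lam t₁ t₂ : ℝ} (hρ0 : 0 ≤ ρ) (hρ1 : ρ ≤ 1)
    (hlam : 0 ≤ lam) (ht : t₁ ≤ t₂) :
    (∫ s in t₁..t₂, (1 + lam) ^ ρ * Real.exp (-(2 * lam * (t₂ - s))))
      ≤ (t₂ - t₁ + 1 / 2) ^ ρ * (t₂ - t₁) ^ (1 - ρ) := by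
  rw [intervalIntegral.integral_const_mul]
  exact rpow_mul_le_rpow_mul_rpow_one_sub (by positivity)
    (intervalIntegral.integral_nonneg ht fun _ _ => (Real.exp_pos _).le) hρ0 hρ1
    (one_add_mul_integral_exp_le hlam ht)
    (integral_exp_neg_mul_sub_le_sub (by positivity) ht)

/-- Scalar spectral content of the integrated semigroup smoothing estimate
`∫_{t₁}^{t₂}‖(I+A)^{ρ/2} E(t₂−s)v‖² ds ≲ (t₂−t₁)^{1−ρ}‖v‖²` (Lemma 3.4, estimate (3.22)). -/
theorem scalar_integrated_semigroup_smoothing (ρ T : ℝ) (hρ0 : 0 ≤ ρ) (hρ1 : ρ ≤ 1) (hT : 0 < T) :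
    ∃ C : ℝ, 0 < C ∧ ∀ lam t₁ t₂ : ℝ, 0 ≤ lam → 0 ≤ t₁ → t₁ ≤ t₂ → t₂ ≤ T →
      (∫ s in t₁..t₂, (1 + lam) ^ ρ * Real.exp (-(2 * lam * (t₂ - s))))
        ≤ C * (t₂ - t₁) ^ (1 - ρ) := by
  refine ⟨(T + 1 / 2) ^ ρ, by positivity, fun lam t₁ t₂ hlam ht₁ ht ht₂ => ?_⟩
  have : 0 ≤ t₂ - t₁ := sub_nonneg.mpr ht
  have length_le : t₂ - t₁ ≤ T := (sub_le_self t₂ ht₁).trans ht₂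
  exact (scalar_integrated_semigroup_smoothing_general hρ0 hρ1 hlam ht).trans (by gcongr)
end

section
/- Let γ ∈ [0,1] and T > 0. There exists a constant C > 0, depending only on γ and T, with the following property: for every complex Hilbert space H, every bounded linear operator A : H → H that is self-adjoint and positive (⟨A v, v⟩ ≥ 0 for all v ∈ H), every τ > 0, every bounded linear operator B : H → H satisfying B ∘ (1 + τA) = (1 + τA) ∘ B = id, every integer n ≥ 1 with nτ ≤ T, and every v ∈ H, one has ‖(1 + A)^(γ/2) (B^n v)‖ ≤ C · (nτ)^(−γ/2) · ‖v‖. -/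
open scoped InnerProductSpace

/-!
By the functional calculus of `a ≥ 0`, the estimate reduces to the scalar bound
`(1 + x) ^ s * (1 + τ x) ^ (-n) ≤ C t ^ (-s)` for `x ≥ 0`, where `t = n τ`. For `s > 0`, Bernoulli's
inequality with exponent `n / s ≥ 1` gives `(1 + t x / s) ^ s ≤ (1 + τ x) ^ n`, and
`t (1 + x) ≤ max t s * (1 + t x / s)`, so that `C = (max t s) ^ s` works.
-/

theorem one_add_mul_div_rpow_le_one_add_rpow {s p y : ℝ} (hs : 0 < s) (hsp : s ≤ p)
    (hy : 0 ≤ y) : (1 + p * y / s) ^ s ≤ (1 + y) ^ p := by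
  have hp : 0 ≤ p := hs.le.trans hsp
  have bernoulli : 1 + p / s * y ≤ (1 + y) ^ (p / s) :=
    one_add_mul_self_le_rpow_one_add (by linarith) ((one_le_div hs).2 hsp)
  calc (1 + p * y / s) ^ s = (1 + p / s * y) ^ s := by rw [div_mul_eq_mul_div]
    _ ≤ ((1 + y) ^ (p / s)) ^ s := Real.rpow_le_rpow (by positivity) bernoulli hs.le
    _ = (1 + y) ^ p := by rw [← Real.rpow_mul (by positivity), div_mul_cancel₀ p hs.ne']

theorem mul_one_add_le_max_mul_one_add_div {s t x : ℝ} (hs : 0 < s) (ht : 0 ≤ t) (hx : 0 ≤ x) :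
    t * (1 + x) ≤ max t s * (1 + t * x / s) :=
  calc t * (1 + x) = t + s * (t * x / s) := by field_simp
    _ ≤ max t s + max t s * (t * x / s) := by gcongr <;> simp
    _ = max t s * (1 + t * x / s) := by ring

theorem one_add_rpow_le_mul_one_add_mul_rpow {s p τ x : ℝ} (hs : 0 ≤ s) (hsp : s ≤ p)
    (hτ : 0 < τ) (hx : 0 ≤ x) :
    (1 + x) ^ s ≤ max (p * τ) s ^ s * (p * τ) ^ (-s) * (1 + τ * x) ^ p := by
  obtain rfl | hs := hs.eq_or_lt
  · simpa using Real.one_le_rpow (by nlinarith : 1 ≤ 1 + τ * x) hsp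
  have ht : 0 < p * τ := mul_pos (hs.trans_le hsp) hτ
  have bound : (p * τ) ^ s * (1 + x) ^ s ≤ max (p * τ) s ^ s * (1 + τ * x) ^ p :=
    calc (p * τ) ^ s * (1 + x) ^ s = (p * τ * (1 + x)) ^ s :=
          (Real.mul_rpow ht.le (by positivity)).symm
      _ ≤ (max (p * τ) s * (1 + p * τ * x / s)) ^ s :=
          Real.rpow_le_rpow (by positivity)
            (mul_one_add_le_max_mul_one_add_div hs ht.le hx) hs.le
      _ = max (p * τ) s ^ s * (1 + p * (τ * x) / s) ^ s := by
          rw [Real.mul_rpow (by positivity) (by positivity), mul_assoc p]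
      _ ≤ max (p * τ) s ^ s * (1 + τ * x) ^ p := by
          gcongr
          exact one_add_mul_div_rpow_le_one_add_rpow hs hsp (by positivity)
  calc (1 + x) ^ s ≤ max (p * τ) s ^ s * (1 + τ * x) ^ p / (p * τ) ^ s :=
        (le_div_iff₀' (by positivity)).2 bound
    _ = max (p * τ) s ^ s * (p * τ) ^ (-s) * (1 + τ * x) ^ p := by
        rw [Real.rpow_neg ht.le, div_eq_mul_inv, mul_right_comm]

theorem eq_cfc_inv_of_mul_cfc_eq_one {R A : Type*} {p : A → Prop} [Semifield R] [StarRing R]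
    [MetricSpace R] [IsTopologicalSemiring R] [ContinuousStar R] [ContinuousInv₀ R]
    [TopologicalSpace A] [Ring A] [StarRing A] [Algebra R A]
    [ContinuousFunctionalCalculus R A p] {a b : A} {f : R → R} (ha : p a)
    (hf : ContinuousOn f (spectrum R a)) (hf₀ : ∀ x ∈ spectrum R a, f x ≠ 0)
    (hb : b * cfc f a = 1) : b = cfc (fun x => (f x)⁻¹) a := by
  have hunit : IsUnit (cfc f a) := (isUnit_cfc_iff f a).2 hf₀
  rw [cfc_inv f a hf₀, ← one_mul (Ring.inverse _),
    Ring.eq_mul_inverse_iff_mul_eq _ _ _ hunit, hb]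

section CStarAlgebra

variable {𝒜 : Type*} [CStarAlgebra 𝒜] [PartialOrder 𝒜] [StarOrderedRing 𝒜] {a b : 𝒜}

theorem one_add_rpow_eq_cfc (ha : 0 ≤ a) (s : ℝ) :
    (1 + a) ^ s = cfc (fun x : ℝ => (1 + x) ^ s) a := by
  have hpos : ∀ x ∈ spectrum ℝ a, 0 < 1 + x := fun x hx => by
    linarith [spectrum_nonneg_of_nonneg ha hx]
  rw [← CFC.cfc_rpow hpos, cfc_const_add .., cfc_id' .., map_one]

theorem one_add_rpow_mul_pow_eq_cfc (ha : 0 ≤ a) {τ : ℝ} (hτ : 0 ≤ τ)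
    (hb : b * (1 + τ • a) = 1) (s : ℝ) (n : ℕ) :
    (1 + a) ^ s * b ^ n = cfc (fun x : ℝ => (1 + x) ^ s * (1 + τ * x)⁻¹ ^ n) a := by
  have hsa : IsSelfAdjoint a := .of_nonneg ha
  have hspec : ∀ x ∈ spectrum ℝ a, 0 ≤ x := fun x hx => spectrum_nonneg_of_nonneg ha hx
  have hne : ∀ x ∈ spectrum ℝ a, 1 + τ * x ≠ 0 := fun x hx => by
    have := hspec x hx
    positivity
  have hcfc : cfc (fun x : ℝ => 1 + τ * x) a = 1 + τ • a := by
    rw [cfc_const_add .., cfc_const_mul_id .., map_one]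
  have hb_cfc : b = cfc (fun x : ℝ => (1 + τ * x)⁻¹) a :=
    eq_cfc_inv_of_mul_cfc_eq_one hsa (by fun_prop) hne (by rwa [hcfc])
  have hinv : ContinuousOn (fun x : ℝ => (1 + τ * x)⁻¹) (spectrum ℝ a) :=
    .inv₀ (by fun_prop) hne
  have hrpow : ContinuousOn (fun x : ℝ => (1 + x) ^ s) (spectrum ℝ a) :=
    .rpow_const (by fun_prop) fun x hx => .inl (by linarith [hspec x hx])
  rw [one_add_rpow_eq_cfc ha, hb_cfc, ← cfc_pow _ n a hinv]
  exact (cfc_mul _ _ a hrpow (hinv.pow n)).symm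

theorem operator_fully_discrete_smoothing_general (ha : 0 ≤ a) {s τ T : ℝ} {n : ℕ}
    (hs : 0 ≤ s) (hsn : s ≤ n) (hτ : 0 < τ) (hb : b * (1 + τ • a) = 1) (hT : n * τ ≤ T) :
    ‖(1 + a) ^ s * b ^ n‖ ≤ max T s ^ s * (n * τ) ^ (-s) := by
  rw [one_add_rpow_mul_pow_eq_cfc ha hτ.le hb]
  refine norm_cfc_le (by positivity) fun x hx => ?_
  have hx₀ : 0 ≤ x := spectrum_nonneg_of_nonneg ha hx
  rw [Real.norm_of_nonneg (by positivity), inv_pow, mul_inv_le_iff₀ (by positivity),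
    ← Real.rpow_natCast]
  calc (1 + x) ^ s ≤ max (n * τ) s ^ s * (n * τ) ^ (-s) * (1 + τ * x) ^ (n : ℝ) :=
        one_add_rpow_le_mul_one_add_mul_rpow hs hsn hτ hx₀
    _ ≤ max T s ^ s * (n * τ) ^ (-s) * (1 + τ * x) ^ (n : ℝ) := by gcongr

end CStarAlgebra

/-- Operator form of the smoothing estimate for the fully discrete semigroup
`Ē_{h,τ}^n = (I + τA_h)^{−n}`, namely `‖(I+A_h)^{γ/2} Ē_{h,τ}^n v_h‖ ≲ t_n^{−γ/2}‖v_h‖`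
with `t_n = nτ` (estimate (4.31)), with constant independent of the operator and of τ. -/
theorem operator_fully_discrete_smoothing (γ T : ℝ) (hγ0 : 0 ≤ γ) (hγ1 : γ ≤ 1) (hT : 0 < T) :
    ∃ C : ℝ, 0 < C ∧
      ∀ (H : Type*) [NormedAddCommGroup H] [InnerProductSpace ℂ H] [CompleteSpace H]
        (A : H →L[ℂ] H), IsSelfAdjoint A → (∀ v : H, 0 ≤ (⟪A v, v⟫_ℂ).re) →
        ∀ τ : ℝ, 0 < τ → ∀ B : H →L[ℂ] H,
          B * (1 + τ • A) = 1 → (1 + τ • A) * B = 1 →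
        ∀ n : ℕ, 1 ≤ n → (n : ℝ) * τ ≤ T → ∀ v : H,
          ‖((1 + A) ^ (γ / 2)) ((B ^ n) v)‖ ≤ C * ((n : ℝ) * τ) ^ (-(γ / 2)) * ‖v‖ := by
  refine ⟨max T (γ / 2) ^ (γ / 2), by positivity, ?_⟩
  intro H _ _ _ A hA hpos τ hτ B hB _ n hn hnT v
  have hA₀ : 0 ≤ A := A.nonneg_iff_isPositive.2 <|
    ContinuousLinearMap.isPositive_def.2 ⟨hA.isSymmetric, hpos⟩
  have hγn : γ / 2 ≤ n := by linarith [Nat.one_le_cast (α := ℝ).2 hn]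
  exact ContinuousLinearMap.le_of_opNorm_le _
    (operator_fully_discrete_smoothing_general hA₀ (by positivity) hγn hτ hB hnT) v
end

section
/- For every γ ∈ [0,1] and every T > 0 there exists a constant C > 0, depending only on γ and T, such that for all real τ > 0, all integers n ≥ 1 with nτ ≤ T, and all real λ ≥ 0, one has (1 + λ)^(γ/2) · (1 + τλ)^(−n) ≤ C · (nτ)^(−γ/2). -/
/-!
Write `a = γ / 2` and `s = nτ`. For `s ≤ T` the factor `s (1 + λ)` is at most a constant times
`1 + sλ`, so it suffices to bound `(1 + nτλ) ^ a` by a constant times `(1 + τλ) ^ n`. That is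
Bernoulli's inequality with exponent `n / a`, which is available as soon as `a ≤ n`.
-/

lemma one_add_div_mul_rpow_le {a p y : ℝ} (ha : 0 < a) (hap : a ≤ p) (hy : 0 ≤ y) :
    (1 + p / a * y) ^ a ≤ (1 + y) ^ p := by
  have hp : 0 ≤ p := ha.le.trans hap
  calc (1 + p / a * y) ^ a
      ≤ ((1 + y) ^ (p / a)) ^ a := by
        gcongr
        exact one_add_mul_self_le_rpow_one_add (by linarith) ((one_le_div₀ ha).2 hap)
    _ = (1 + y) ^ p := by rw [← Real.rpow_mul (by positivity), div_mul_cancel₀ p ha.ne']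

lemma one_add_mul_rpow_le {a p y : ℝ} (ha : 0 ≤ a) (hap : a ≤ p) (hy : 0 ≤ y) :
    (1 + p * y) ^ a ≤ max 1 a ^ a * (1 + y) ^ p := by
  have hp : 0 ≤ p := ha.trans hap
  obtain rfl | ha := ha.eq_or_lt
  · simpa only [Real.rpow_zero, one_mul] using Real.one_le_rpow (by linarith) hp
  have hbase : 1 + p * y ≤ max 1 a * (1 + p / a * y) := by
    calc 1 + p * y = 1 + a * (p / a * y) := by field_simp
      _ ≤ max 1 a + max 1 a * (p / a * y) := by gcongr <;> simp
      _ = max 1 a * (1 + p / a * y) := by ring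
  calc (1 + p * y) ^ a
      ≤ (max 1 a * (1 + p / a * y)) ^ a := by gcongr
    _ = max 1 a ^ a * (1 + p / a * y) ^ a := Real.mul_rpow (by positivity) (by positivity)
    _ ≤ max 1 a ^ a * (1 + y) ^ p := by gcongr; exact one_add_div_mul_rpow_le ha hap hy

lemma mul_one_add_le_max_mul {s T x : ℝ} (hs : 0 ≤ s) (hsT : s ≤ T) (hx : 0 ≤ x) :
    s * (1 + x) ≤ max 1 T * (1 + s * x) := by
  calc s * (1 + x) = s + 1 * (s * x) := by ring
    _ ≤ max 1 T + max 1 T * (s * x) := by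
        gcongr
        · exact hsT.trans (le_max_right 1 T)
        · exact le_max_left 1 T
    _ = max 1 T * (1 + s * x) := by ring

lemma mul_mul_one_add_rpow_le {a p τ T x : ℝ} (ha : 0 ≤ a) (hap : a ≤ p) (hτ : 0 ≤ τ)
    (hpT : p * τ ≤ T) (hx : 0 ≤ x) :
    (p * τ * (1 + x)) ^ a ≤ (max 1 T * max 1 a) ^ a * (1 + τ * x) ^ p := by
  have hp : 0 ≤ p := ha.trans hap
  calc (p * τ * (1 + x)) ^ a
      ≤ (max 1 T * (1 + p * τ * x)) ^ a :=
        Real.rpow_le_rpow (by positivity) (mul_one_add_le_max_mul (by positivity) hpT hx) ha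
    _ = max 1 T ^ a * (1 + p * (τ * x)) ^ a := by
        rw [Real.mul_rpow (by positivity) (by positivity), mul_assoc p]
    _ ≤ max 1 T ^ a * (max 1 a ^ a * (1 + τ * x) ^ p) := by
        gcongr
        exact one_add_mul_rpow_le ha hap (by positivity)
    _ = (max 1 T * max 1 a) ^ a * (1 + τ * x) ^ p := by
        rw [Real.mul_rpow (by positivity) (by positivity), mul_assoc]

theorem scalar_backward_euler_smoothing_general {γ T τ lam : ℝ} {n : ℕ} (hγ : 0 ≤ γ)
    (hγn : γ / 2 ≤ n) (hn : 1 ≤ n) (hτ : 0 < τ) (hnT : n * τ ≤ T) (hlam : 0 ≤ lam) :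
    (1 + lam) ^ (γ / 2) * ((1 + τ * lam)⁻¹) ^ n ≤
      (max 1 T * max 1 (γ / 2)) ^ (γ / 2) * (n * τ) ^ (-(γ / 2)) := by
  have hnτ : 0 < n * τ := by positivity
  have hsmooth : (n * τ) ^ (γ / 2) * (1 + lam) ^ (γ / 2) ≤
      (max 1 T * max 1 (γ / 2)) ^ (γ / 2) * (1 + τ * lam) ^ n := by
    rw [← Real.mul_rpow hnτ.le (by positivity), ← Real.rpow_natCast]
    exact mul_mul_one_add_rpow_le (by positivity) hγn hτ.le hnT hlam
  rw [inv_pow, Real.rpow_neg hnτ.le, ← div_eq_mul_inv, ← div_eq_mul_inv,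
    div_le_div_iff₀ (by positivity) (by positivity), mul_comm]
  exact hsmooth

/-- Scalar inequality (4.34): smoothing for the backward-Euler rational function,
`(1 + λ)^{γ/2} (1 + τλ)^{−n} ≤ C (nτ)^{−γ/2}`. -/
theorem scalar_backward_euler_smoothing (γ T : ℝ) (hγ0 : 0 ≤ γ) (hγ1 : γ ≤ 1) (hT : 0 < T) :
    ∃ C : ℝ, 0 < C ∧ ∀ τ : ℝ, 0 < τ → ∀ n : ℕ, 1 ≤ n → (n : ℝ) * τ ≤ T →
      ∀ lam : ℝ, 0 ≤ lam →
        (1 + lam) ^ (γ / 2) * ((1 + τ * lam)⁻¹) ^ n ≤ C * ((n : ℝ) * τ) ^ (-(γ / 2)) :=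
  ⟨(max 1 T * max 1 (γ / 2)) ^ (γ / 2), by positivity, fun _ hτ _ hn hnT _ hlam =>
    scalar_backward_euler_smoothing_general hγ0
      (by linarith [(Nat.one_le_cast (α := ℝ)).2 hn]) hn hτ hnT hlam⟩
end

section
/- For every real λ ≥ 0, every real τ > 0 and every natural number n, one has Σ_{j=1}^{n} ∫_{(j−1)τ}^{jτ} (exp(−λ s) − exp(−λ j τ))² ds ≤ τ/2. -/
/-!
For convex `f`, the graph lies below its chord, so on `[a, b]` one has
`f s - f b ≤ (f a - f b) * (b - s) / (b - a)`; if moreover `f` is antitone, squaring and integrating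
gives the bound `(b - a) / 3 * (f a - f b) ^ 2`. Along a partition of mesh at most `τ` the
increments `f (t j) - f (t (j + 1))` are nonnegative, so the sum of their squares is at most the
square of their sum, which telescopes to `(f (t 0) - f (t n)) ^ 2`. For `f s = exp (-(lam * s))` on
`[0, ∞)` that square is at most `1`, which gives the sum the sharper bound `τ / 3`.
-/

open Set

lemma sub_right_le_chord_of_convexOn {𝕜 : Type*} [Field 𝕜] [LinearOrder 𝕜] [IsStrictOrderedRing 𝕜]
    {f : 𝕜 → 𝕜} {a b s : 𝕜} (hf : ConvexOn 𝕜 (Icc a b) f) (hab : a < b) (hs : s ∈ Icc a b) :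
    f s - f b ≤ (f a - f b) / (b - a) * (b - s) := by
  have hba : 0 < b - a := sub_pos.mpr hab
  have hconv := hf.2 (left_mem_Icc.mpr hab.le) (right_mem_Icc.mpr hab.le)
    (div_nonneg (sub_nonneg.mpr hs.2) hba.le) (div_nonneg (sub_nonneg.mpr hs.1) hba.le)
    (by field_simp; ring)
  have hcomb : (b - s) / (b - a) * a + (s - a) / (b - a) * b = s := by field_simp; ring
  simp only [smul_eq_mul, hcomb] at hconv
  calc f s - f b ≤ (b - s) / (b - a) * f a + (s - a) / (b - a) * f b - f b := by gcongr
    _ = (f a - f b) / (b - a) * (b - s) := by field_simp; ring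

lemma intervalIntegrable_sq_sub_right_of_antitoneOn {f : ℝ → ℝ} {a b : ℝ} (hab : a ≤ b)
    (hf : AntitoneOn f (Icc a b)) :
    IntervalIntegrable (fun s ↦ (f s - f b) ^ 2) MeasureTheory.volume a b := by
  refine AntitoneOn.intervalIntegrable fun x hx y hy hxy ↦ ?_
  rw [uIcc_of_le hab] at hx hy
  have hfy : 0 ≤ f y - f b := sub_nonneg.mpr (hf hy (right_mem_Icc.mpr hab) hy.2)
  exact pow_le_pow_left₀ hfy (sub_le_sub_right (hf hx hy hxy) _) 2

lemma integral_sq_const_mul_right_sub (c a b : ℝ) :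
    ∫ s in a..b, (c * (b - s)) ^ 2 = c ^ 2 * ((b - a) ^ 3 / 3) := by
  simp only [mul_pow, intervalIntegral.integral_const_mul]
  rw [intervalIntegral.integral_comp_sub_left (fun u ↦ u ^ 2) b, integral_pow]
  norm_num

lemma integral_sq_sub_right_le_of_convexOn {f : ℝ → ℝ} {a b : ℝ} (hab : a ≤ b)
    (hconv : ConvexOn ℝ (Icc a b) f) (hanti : AntitoneOn f (Icc a b)) :
    ∫ s in a..b, (f s - f b) ^ 2 ≤ (b - a) / 3 * (f a - f b) ^ 2 := by
  obtain rfl | hlt := hab.eq_or_lt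
  · simp
  calc ∫ s in a..b, (f s - f b) ^ 2
      ≤ ∫ s in a..b, ((f a - f b) / (b - a) * (b - s)) ^ 2 := by
        refine intervalIntegral.integral_mono_on hab
          (intervalIntegrable_sq_sub_right_of_antitoneOn hab hanti)
          (Continuous.intervalIntegrable (by fun_prop) _ _) fun s hs ↦ ?_
        have hfs : 0 ≤ f s - f b := sub_nonneg.mpr (hanti hs (right_mem_Icc.mpr hab) hs.2)
        exact pow_le_pow_left₀ hfs (sub_right_le_chord_of_convexOn hconv hlt hs) 2
    _ = ((f a - f b) / (b - a)) ^ 2 * ((b - a) ^ 3 / 3) := integral_sq_const_mul_right_sub _ a b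
    _ = (b - a) / 3 * (f a - f b) ^ 2 := by
        have hba : b - a ≠ 0 := (sub_pos.mpr hlt).ne'
        field_simp

lemma sum_sq_sub_succ_le_of_antitoneOn {R : Type*} [Ring R] [PartialOrder R]
    [IsOrderedRing R] {u : ℕ → R} {n : ℕ} (hu : AntitoneOn u (Iic n)) :
    ∑ j ∈ Finset.range n, (u j - u (j + 1)) ^ 2 ≤ (u 0 - u n) ^ 2 := by
  rw [← Finset.sum_range_sub' u n]
  refine Finset.sum_sq_le_sq_sum_of_nonneg fun j hj ↦ sub_nonneg.mpr ?_
  have hjn : j < n := Finset.mem_range.mp hj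
  exact hu hjn.le hjn j.le_succ

theorem scalar_right_endpoint_exponential_sum_general {f : ℝ → ℝ} {t : ℕ → ℝ} {n : ℕ} {τ : ℝ}
    (ht : MonotoneOn t (Iic n)) (hmesh : ∀ j < n, t (j + 1) - t j ≤ τ)
    (hconv : ConvexOn ℝ (Icc (t 0) (t n)) f) (hanti : AntitoneOn f (Icc (t 0) (t n))) :
    ∑ j ∈ Finset.range n, ∫ s in t j..t (j + 1), (f s - f (t (j + 1))) ^ 2
      ≤ τ / 3 * (f (t 0) - f (t n)) ^ 2 := by
  obtain rfl | hn := n.eq_zero_or_pos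
  · simp
  have hmem : MapsTo t (Iic n) (Icc (t 0) (t n)) := fun j hj ↦
    ⟨ht n.zero_le hj j.zero_le, ht hj self_mem_Iic hj⟩
  have hτ : 0 ≤ τ := (sub_nonneg.mpr (ht n.zero_le hn zero_le_one)).trans (hmesh 0 hn)
  calc ∑ j ∈ Finset.range n, ∫ s in t j..t (j + 1), (f s - f (t (j + 1))) ^ 2
      ≤ ∑ j ∈ Finset.range n, τ / 3 * (f (t j) - f (t (j + 1))) ^ 2 := by
        refine Finset.sum_le_sum fun j hj ↦ ?_
        have hjn : j < n := Finset.mem_range.mp hj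
        have hsub : Icc (t j) (t (j + 1)) ⊆ Icc (t 0) (t n) :=
          Icc_subset_Icc (hmem hjn.le).1 (hmem hjn).2
        refine (integral_sq_sub_right_le_of_convexOn (ht hjn.le hjn j.le_succ)
          (hconv.subset hsub (convex_Icc _ _)) (hanti.mono hsub)).trans ?_
        gcongr
        exact hmesh j hjn
    _ = τ / 3 * ∑ j ∈ Finset.range n, (f (t j) - f (t (j + 1))) ^ 2 := by rw [Finset.mul_sum]
    _ ≤ τ / 3 * (f (t 0) - f (t n)) ^ 2 := by
        gcongr
        exact sum_sq_sub_succ_le_of_antitoneOn fun i hi j hj hij ↦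
          hanti (hmem hi) (hmem hj) (ht hi hj hij)

lemma convexOn_exp_neg_mul (lam : ℝ) : ConvexOn ℝ univ fun s ↦ Real.exp (-(lam * s)) := by
  simpa [Function.comp_def] using convexOn_exp.comp_linearMap (LinearMap.mulLeft ℝ (-lam))

lemma antitone_exp_neg_mul {lam : ℝ} (hlam : 0 ≤ lam) :
    Antitone fun s ↦ Real.exp (-(lam * s)) :=
  Real.exp_monotone.comp_antitone (monotone_id.const_mul hlam).neg

/-- Scalar spectral content of estimate (4.40):
`Σ_j ∫_{t_{j−1}}^{t_j} (e^{−λs} − e^{−λ t_j})² ds ≤ τ/2`. -/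
theorem scalar_right_endpoint_exponential_sum (lam τ : ℝ) (hlam : 0 ≤ lam) (hτ : 0 < τ)
    (n : ℕ) :
    ∑ j ∈ Finset.Icc 1 n, ∫ s in (((j : ℝ) - 1) * τ)..((j : ℝ) * τ),
        (Real.exp (-(lam * s)) - Real.exp (-(lam * ((j : ℝ) * τ)))) ^ 2 ≤ τ / 2 := by
  have hgrid : Monotone fun j : ℕ ↦ (j : ℝ) * τ := Nat.mono_cast.mul_const hτ.le
  have hanti := antitone_exp_neg_mul hlam
  calc _ = ∑ j ∈ Finset.range n, ∫ s in ((j : ℝ) * τ)..(((j + 1 : ℕ) : ℝ) * τ),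
        (Real.exp (-(lam * s)) - Real.exp (-(lam * (((j + 1 : ℕ) : ℝ) * τ)))) ^ 2 := by
        rw [← Finset.Ico_add_one_right_eq_Icc, Finset.sum_Ico_eq_sum_range]
        simp [add_comm]
    _ ≤ τ / 3 * (Real.exp (-(lam * ((0 : ℕ) * τ))) - Real.exp (-(lam * (n * τ)))) ^ 2 :=
        scalar_right_endpoint_exponential_sum_general (hgrid.monotoneOn _)
          (fun j _ ↦ by push_cast; linarith)
          ((convexOn_exp_neg_mul lam).subset (subset_univ _) (convex_Icc _ _))
          (hanti.antitoneOn _)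
    _ ≤ τ / 3 * 1 := by
        gcongr
        exact pow_le_one₀ (sub_nonneg.mpr (hanti (hgrid n.zero_le))) (by simp [Real.exp_nonneg])
    _ ≤ τ / 2 := by linarith
end

section
/- There exists a constant C > 0 such that for every integer n ≥ 1 and every real x ≥ 0, one has |exp(−n x) − (1 + x)^(−n)| ≤ C · min(x^(1/2), n^(−1/2)). -/
/-!
With `s = t x / (1 + x)`, the inequalities `x / (1 + x) ≤ log (1 + x) ≤ x` bound the error
`D = (1 + x) ^ (-t) - exp (-t x)` below by `0` and above by both `exp (-s)` and `s x exp (-s)`.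
The second upper bound gives `D ≤ x`. Since `t x = s (1 + x)`, combining both gives
`t D ≤ (s + s ^ 2) exp (-s) ≤ 1`. As `0 ≤ D ≤ 1`, also `D ≤ D ^ θ ≤ min (x ^ θ) (t ^ (-θ))` for
`θ ∈ [0, 1]`, and the theorem is the case `θ = 1 / 2`.
-/

section

open Real

lemma add_sq_le_exp {s : ℝ} (hs : 0 ≤ s) : s + s ^ 2 ≤ exp s := by
  calc s + s ^ 2 ≤ s + s ^ 2 + ((s - 2) ^ 2 * (s + 1) + 2) / 6 :=
        le_add_of_nonneg_right (by positivity)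
    _ = 1 + s + s ^ 2 / 2 + s ^ 3 / 6 := by ring
    _ ≤ exp s := by simpa [Finset.sum_range_succ, Nat.factorial] using sum_le_exp_of_nonneg hs 4

lemma exp_sub_exp_le (u v : ℝ) : exp u - exp v ≤ (u - v) * exp u := by
  have tangent : v - u + 1 ≤ exp (v - u) := add_one_le_exp (v - u)
  calc exp u - exp v = (1 - exp (v - u)) * exp u := by
        rw [sub_mul, one_mul, ← exp_add, sub_add_cancel]
    _ ≤ (u - v) * exp u := mul_le_mul_of_nonneg_right (by linarith) (exp_pos u).le

lemma div_one_add_le_log_one_add {x : ℝ} (hx : -1 < x) : x / (1 + x) ≤ log (1 + x) := by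
  have hpos : 0 < 1 + x := by linarith
  calc x / (1 + x) = 1 - (1 + x)⁻¹ := by field_simp; ring
    _ ≤ log (1 + x) := one_sub_inv_le_log_of_pos hpos

lemma le_rpow_of_le_of_le_one {y z θ : ℝ} (hy₀ : 0 ≤ y) (hy₁ : y ≤ 1) (hyz : y ≤ z)
    (hθ₀ : 0 ≤ θ) (hθ₁ : θ ≤ 1) : y ≤ z ^ θ :=
  (self_le_rpow_of_le_one hy₀ hy₁ hθ₁).trans (rpow_le_rpow hy₀ hyz hθ₀)

variable {t x : ℝ}

lemma exp_neg_mul_le_one_add_rpow_neg (ht : 0 ≤ t) (hx : -1 < x) :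
    exp (-(t * x)) ≤ (1 + x) ^ (-t) := by
  have hpos : 0 < 1 + x := by linarith
  have hlog : log (1 + x) ≤ x := by linarith [log_le_sub_one_of_pos hpos]
  rw [rpow_def_of_pos hpos, exp_le_exp]
  linarith [mul_le_mul_of_nonneg_left hlog ht]

lemma one_add_rpow_neg_le_exp (ht : 0 ≤ t) (hx : -1 < x) :
    (1 + x) ^ (-t) ≤ exp (-(t * (x / (1 + x)))) := by
  rw [rpow_def_of_pos (by linarith), exp_le_exp]
  linarith [mul_le_mul_of_nonneg_left (div_one_add_le_log_one_add hx) ht]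

lemma one_add_rpow_neg_sub_exp_le (ht : 0 ≤ t) (hx : -1 < x) :
    (1 + x) ^ (-t) - exp (-(t * x)) ≤
      t * (x ^ 2 / (1 + x)) * exp (-(t * (x / (1 + x)))) := by
  have hpos : 0 < 1 + x := by linarith
  have hgap : x - log (1 + x) ≤ x ^ 2 / (1 + x) := by
    have hsub : x - x / (1 + x) = x ^ 2 / (1 + x) := by field_simp; ring
    linarith [div_one_add_le_log_one_add hx]
  calc (1 + x) ^ (-t) - exp (-(t * x))
      ≤ (log (1 + x) * -t - -(t * x)) * (1 + x) ^ (-t) := by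
        rw [rpow_def_of_pos hpos]
        exact exp_sub_exp_le _ _
    _ = t * (x - log (1 + x)) * (1 + x) ^ (-t) := by ring
    _ ≤ t * (x ^ 2 / (1 + x)) * exp (-(t * (x / (1 + x)))) := by
        gcongr
        exact one_add_rpow_neg_le_exp ht hx

lemma one_add_rpow_neg_sub_exp_le_self (ht : 0 ≤ t) (hx : 0 ≤ x) :
    (1 + x) ^ (-t) - exp (-(t * x)) ≤ x := by
  set s := t * (x / (1 + x)) with hs
  calc (1 + x) ^ (-t) - exp (-(t * x))
      ≤ t * (x ^ 2 / (1 + x)) * exp (-s) := one_add_rpow_neg_sub_exp_le ht (by linarith)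
    _ = x * (s * exp (-s)) := by rw [hs]; ring
    _ ≤ x * 1 := by
        gcongr
        exact (mul_exp_neg_le_exp_neg_one s).trans (exp_le_one_iff.2 (by norm_num))
    _ = x := mul_one x

lemma one_add_rpow_neg_sub_exp_le_inv (ht : 0 < t) (hx : 0 ≤ x) :
    (1 + x) ^ (-t) - exp (-(t * x)) ≤ t⁻¹ := by
  rcases hx.eq_or_lt with rfl | hx_pos
  · simpa using ht.le
  set s := t * (x / (1 + x)) with hs
  set D := (1 + x) ^ (-t) - exp (-(t * x))
  have hs₀ : 0 ≤ s := by positivity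
  have ht_eq : t = s / x + s := by rw [hs]; field_simp
  have hD_exp : D ≤ exp (-s) := by
    linarith [one_add_rpow_neg_le_exp ht.le (by linarith : -1 < x), exp_pos (-(t * x))]
  have hD_mul : D ≤ x * (s * exp (-s)) :=
    (one_add_rpow_neg_sub_exp_le ht.le (by linarith)).trans_eq (by rw [hs]; ring)
  rw [← one_div, le_div_iff₀' ht]
  calc t * D = s / x * D + s * D := by rw [← add_mul, ← ht_eq]
    _ ≤ s / x * (x * (s * exp (-s))) + s * exp (-s) := by gcongr
    _ = (s + s ^ 2) * exp (-s) := by field_simp; ring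
    _ ≤ exp s * exp (-s) := by gcongr; exact add_sq_le_exp hs₀
    _ = 1 := by rw [← exp_add, add_neg_cancel, exp_zero]

theorem rational_approx_exp_bound_general {t x θ : ℝ} (hθ₀ : 0 ≤ θ) (hθ₁ : θ ≤ 1)
    (ht : 0 < t) (hx : 0 ≤ x) :
    |exp (-(t * x)) - (1 + x) ^ (-t)| ≤ min (x ^ θ) (t ^ (-θ)) := by
  have nonneg : 0 ≤ (1 + x) ^ (-t) - exp (-(t * x)) :=
    sub_nonneg.2 (exp_neg_mul_le_one_add_rpow_neg ht.le (by linarith))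
  have le_one : (1 + x) ^ (-t) - exp (-(t * x)) ≤ 1 := by
    linarith [rpow_le_one_of_one_le_of_nonpos (by linarith : 1 ≤ 1 + x) (neg_nonpos.2 ht.le),
      exp_pos (-(t * x))]
  rw [abs_sub_comm, abs_of_nonneg nonneg, rpow_neg_eq_inv_rpow t]
  exact le_min
    (le_rpow_of_le_of_le_one nonneg le_one (one_add_rpow_neg_sub_exp_le_self ht.le hx) hθ₀ hθ₁)
    (le_rpow_of_le_of_le_one nonneg le_one (one_add_rpow_neg_sub_exp_le_inv ht hx) hθ₀ hθ₁)

end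

/-- The bounds `|F_n(x)| ≲ x^{1/2}` and `|F_n(x)| ≲ n^{−1/2}` for
`F_n(x) = e^{−nx} − (1+x)^{−n}` (Lemma 4.8). -/
theorem rational_approx_exp_bound :
    ∃ C : ℝ, 0 < C ∧ ∀ n : ℕ, 1 ≤ n → ∀ x : ℝ, 0 ≤ x →
      |Real.exp (-((n : ℝ) * x)) - ((1 + x) ^ n)⁻¹|
        ≤ C * min (x ^ ((1:ℝ)/2)) ((n : ℝ) ^ (-(1:ℝ)/2)) := by
  refine ⟨1, one_pos, fun n hn x hx => ?_⟩
  simpa [Real.rpow_neg, neg_div, add_nonneg, hx] using rational_approx_exp_bound_general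
    (by norm_num : (0 : ℝ) ≤ 1 / 2) (by norm_num) (Nat.cast_pos.2 hn) hx
end

section
/- There exists a constant C > 0 such that for all real λ ≥ 0, all real τ > 0, all natural numbers m, and every function ξ : ℕ → ℝ satisfying (j−1)τ ≤ ξ j ≤ jτ for each 1 ≤ j ≤ m, one has Σ_{j=1}^{m} ∫_{(j−1)τ}^{jτ} (exp(−λ · ξ j) − exp(−λ σ))² dσ ≤ C · τ. -/
/-!
Only the monotonicity of `σ ↦ exp (-(λσ))` matters. On a cell `[a, b]` an antitone function `f`
satisfies `|f x - f σ| ≤ f a - f b`. The squares of the drops `f a - f b` over consecutive cells add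
up to at most the square of the total drop, which for the exponential on `[0, ∞)` is at most `1`.
Hence no interval needs separate treatment, and `C = 1` works.
-/

theorem sum_pow_le_pow_sum_of_nonneg {ι R : Type*} [CommSemiring R] [PartialOrder R]
    [IsOrderedRing R] {s : Finset ι} {f : ι → R} (hf : ∀ i ∈ s, 0 ≤ f i) {p : ℕ} (hp : p ≠ 0) :
    ∑ i ∈ s, f i ^ p ≤ (∑ i ∈ s, f i) ^ p := by
  induction s using Finset.cons_induction with
  | empty => simp [hp]
  | cons i s hi ih =>
    rw [Finset.forall_mem_cons] at hf
    simp only [Finset.sum_cons]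
    calc f i ^ p + ∑ j ∈ s, f j ^ p ≤ f i ^ p + (∑ j ∈ s, f j) ^ p := by gcongr; exact ih hf.2
      _ ≤ (f i + ∑ j ∈ s, f j) ^ p := pow_add_pow_le hf.1 (Finset.sum_nonneg hf.2) hp

theorem integral_abs_sub_pow_le_of_antitoneOn {f : ℝ → ℝ} {a b x : ℝ}
    (hf : AntitoneOn f (Set.Icc a b)) (hx : x ∈ Set.Icc a b) (p : ℕ) :
    ∫ σ in a..b, |f x - f σ| ^ p ≤ (f a - f b) ^ p * (b - a) := by
  have hab : a ≤ b := hx.1.trans hx.2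
  have hosc : ∀ σ ∈ Set.uIoc a b, ‖|f x - f σ| ^ p‖ ≤ (f a - f b) ^ p := by
    intro σ hσ
    rw [Set.uIoc_of_le hab] at hσ
    rw [norm_pow, norm_abs_eq_norm]
    gcongr
    exact Real.dist_le_of_mem_Icc (hf.mapsTo_Icc hx)
      (hf.mapsTo_Icc (Set.Ioc_subset_Icc_self hσ))
  calc ∫ σ in a..b, |f x - f σ| ^ p ≤ ‖∫ σ in a..b, |f x - f σ| ^ p‖ := Real.le_norm_self _
    _ ≤ (f a - f b) ^ p * |b - a| := intervalIntegral.norm_integral_le_of_norm_le_const hosc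
    _ = (f a - f b) ^ p * (b - a) := by rw [abs_of_nonneg (sub_nonneg.2 hab)]

theorem sum_integral_abs_sub_pow_le_of_antitoneOn {f : ℝ → ℝ} {t ξ : ℕ → ℝ} {m : ℕ} {h : ℝ}
    (ht : Monotone t) (hmesh : ∀ j < m, t (j + 1) - t j ≤ h)
    (hf : AntitoneOn f (Set.Icc (t 0) (t m))) (hξ : ∀ j < m, ξ j ∈ Set.Icc (t j) (t (j + 1)))
    {p : ℕ} (hp : p ≠ 0) :
    ∑ j ∈ Finset.range m, ∫ σ in t j..t (j + 1), |f (ξ j) - f σ| ^ p ≤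
      (f (t 0) - f (t m)) ^ p * h := by
  obtain rfl | hm := eq_or_ne m 0
  · simp [hp]
  have hcell : ∀ j < m, AntitoneOn f (Set.Icc (t j) (t (j + 1))) := fun j hj ↦
    hf.mono (Set.Icc_subset_Icc (ht (Nat.zero_le j)) (ht hj))
  have hstep : ∀ j, t j ≤ t (j + 1) := fun j ↦ ht j.le_succ
  have hdrop : ∀ j < m, 0 ≤ f (t j) - f (t (j + 1)) := fun j hj ↦ sub_nonneg.2 <|
    hcell j hj (Set.left_mem_Icc.2 (hstep j)) (Set.right_mem_Icc.2 (hstep j)) (hstep j)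
  have hh : 0 ≤ h := (sub_nonneg.2 (hstep 0)).trans (hmesh 0 (Nat.pos_of_ne_zero hm))
  calc ∑ j ∈ Finset.range m, ∫ σ in t j..t (j + 1), |f (ξ j) - f σ| ^ p
      ≤ ∑ j ∈ Finset.range m, (f (t j) - f (t (j + 1))) ^ p * h := by
        refine Finset.sum_le_sum fun j hj ↦ ?_
        rw [Finset.mem_range] at hj
        exact (integral_abs_sub_pow_le_of_antitoneOn (hcell j hj) (hξ j hj) p).trans <|
          mul_le_mul_of_nonneg_left (hmesh j hj) (pow_nonneg (hdrop j hj) p)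
    _ = (∑ j ∈ Finset.range m, (f (t j) - f (t (j + 1))) ^ p) * h := (Finset.sum_mul ..).symm
    _ ≤ (∑ j ∈ Finset.range m, (f (t j) - f (t (j + 1)))) ^ p * h := by
        gcongr
        exact sum_pow_le_pow_sum_of_nonneg (fun j hj ↦ hdrop j (Finset.mem_range.1 hj)) hp
    _ = (f (t 0) - f (t m)) ^ p * h := by rw [Finset.sum_range_sub' fun j ↦ f (t j)]

theorem antitone_exp_neg_mul_s13 {c : ℝ} (hc : 0 ≤ c) : Antitone fun x ↦ Real.exp (-(c * x)) :=
  fun x y hxy ↦ by dsimp only; gcongr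

theorem abs_exp_neg_sub_exp_neg_le_one {x y : ℝ} (hx : 0 ≤ x) (hy : 0 ≤ y) :
    |Real.exp (-x) - Real.exp (-y)| ≤ 1 :=
  Real.dist_le_of_mem_Icc_01
    ⟨(Real.exp_pos _).le, Real.exp_le_one_iff.2 (neg_nonpos.2 hx)⟩
    ⟨(Real.exp_pos _).le, Real.exp_le_one_iff.2 (neg_nonpos.2 hy)⟩

/-- Scalar spectral content of the estimate
`Σ_j ∫_{t_{j−1}}^{t_j} (e^{−λξ_j} − e^{−λσ})² dσ ≲ τ` (term J*_{241} in Section 5). -/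
theorem scalar_intermediate_point_exponential_sum :
    ∃ C : ℝ, 0 < C ∧ ∀ lam τ : ℝ, 0 ≤ lam → 0 < τ → ∀ (m : ℕ) (ξ : ℕ → ℝ),
      (∀ j : ℕ, 1 ≤ j → j ≤ m → ((j : ℝ) - 1) * τ ≤ ξ j ∧ ξ j ≤ (j : ℝ) * τ) →
      (∑ j ∈ Finset.Icc 1 m, ∫ σ in (((j : ℝ) - 1) * τ)..((j : ℝ) * τ),
          (Real.exp (-(lam * ξ j)) - Real.exp (-(lam * σ))) ^ 2) ≤ C * τ := by
  refine ⟨1, one_pos, fun lam τ hlam hτ m ξ hξ ↦ ?_⟩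
  have hgrid : Monotone fun j : ℕ ↦ (j : ℝ) * τ := Nat.mono_cast.mul_const hτ.le
  have hnodes : ∀ j < m, ξ (j + 1) ∈ Set.Icc ((j : ℝ) * τ) (((j + 1 : ℕ) : ℝ) * τ) :=
    fun j hj ↦ by simpa using hξ (j + 1) j.succ_pos hj
  rw [← Finset.Ico_add_one_right_eq_Icc, Finset.sum_Ico_eq_sum_range]
  calc ∑ j ∈ Finset.range m, ∫ σ in (((1 + j : ℕ) : ℝ) - 1) * τ..((1 + j : ℕ) : ℝ) * τ,
          (Real.exp (-(lam * ξ (1 + j))) - Real.exp (-(lam * σ))) ^ 2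
      = ∑ j ∈ Finset.range m, ∫ σ in (j : ℝ) * τ..((j + 1 : ℕ) : ℝ) * τ,
          |Real.exp (-(lam * ξ (j + 1))) - Real.exp (-(lam * σ))| ^ 2 := by
        simp [sq_abs, add_comm 1]
    _ ≤ (Real.exp (-(lam * ((0 : ℕ) * τ))) - Real.exp (-(lam * (m * τ)))) ^ 2 * τ :=
        sum_integral_abs_sub_pow_le_of_antitoneOn hgrid (fun j _ ↦ by push_cast; linarith)
          ((antitone_exp_neg_mul_s13 hlam).antitoneOn _) hnodes two_ne_zero
    _ ≤ 1 * τ := by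
        gcongr
        exact (sq_le_one_iff_abs_le_one _).2 <|
          abs_exp_neg_sub_exp_neg_le_one (by positivity) (by positivity)
end
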